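/- Let k be a field, A a finite-dimensional k-algebra, and B a unital k-subalgebra of A such that the projective dimension of A as a right B-module equals n < ∞. Let M be a left B-module, let m ≥ n, and let Ω_B^m(M) be an m-th syzygy of M, i.e., a left B-module N fitting into an exact sequence 0 → N → P_{m-1} → ⋯ → P_0 → M → 0 with each P_i a projective left B-module. Then the projective dimension of the left A-module A ⊗_B N is at most the projective dimension of M as a left B-module. -/

import Mathlib

/-!
Why the bound holds. Only the case `pd M = s < ∞` matters, and then also `pd N ≤ s`, because
passing to a syzygy does not increase the projective dimension (`syzygy_properties`; the
recursive `pdLE` is compared with vanishing of `Ext` in `pdLE_iff_hasProjectiveDimensionLE`).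
Take a projective resolution of `N` of length `s`. Every syzygy `L` occurring in it is again an
`l`-th syzygy for some `l ≥ m ≥ n`, so `Tor₁(A, L) = Tor_{l+1}(A, -) = 0` since `pd(A_B) ≤ n`.
Hence `A ⊗_B -` carries the resolution to an exact sequence of projective `A`-modules of the same
length, ending in `A ⊗_B N` (`pdLE_btensor`).

The vanishing of `Tor₁` is expressed without derived functors as injectivity of
`X ⊗ K → X ⊗ P` for `0 → K → P → N → 0` exact (`btMap_injective_of_isSyz`). It is proved by
dimension shifting, simultaneously replacing `X` by the kernel of a surjection from a projective and
`N` by its cosyzygy. The ingredients are right exactness of the balanced tensor product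
(`mem_of_btMap_eq_zero`) and flatness of projectives on both sides.
-/

/-!
Statement 3 (Lemma 2.3): if `pd(A_B) = n < ∞` then for any left `B`-module `M` and any
`m ≥ n`, and any `m`-th syzygy `N = Ω_B^m(M)` of `M`, one has
`pd(_A A ⊗_B N) ≤ pd(_B M)`.

The syzygy is encoded by an `ℕ`-indexed exact sequence
`⋯ → Q₁ → Q₀ → M → 0` with `Qᵢ` projective for `i < m` and `Qᵢ = 0` for `i > m`;
then `N := Q m` fits in an exact sequence `0 → N → Q_{m-1} → ⋯ → Q₀ → M → 0`
(for `m = 0` this just says `N ≅ M`).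
-/

open scoped TensorProduct

universe u v w x

/-- `pdLE R n M` : the projective dimension of the `R`-module `M` is at most `n`.
It holds iff `M` is projective (`n = 0`), or there is a short exact sequence
`0 → K → P → M → 0` with `P` projective and `pdLE R n.pred K` (`n > 0`). -/
def pdLE (R : Type u) [Ring R] : ℕ → ∀ (M : Type v) [AddCommGroup M] [Module R M], Prop
  | 0, M, _, _ => Module.Projective R M
  | n+1, M, _, _ => ∃ (P : Type v) (_ : AddCommGroup P) (_ : Module R P) (f : P →ₗ[R] M),
      Module.Projective R P ∧ Function.Surjective f ∧ pdLE R n (LinearMap.ker f)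

/-- The projective dimension of an `R`-module `M`, as an element of `ℕ∞`
(`⊤` if `M` has no finite projective resolution). -/
noncomputable def projDim (R : Type u) [Ring R] (M : Type v) [AddCommGroup M] [Module R M] :
    ℕ∞ :=
  sInf {c : ℕ∞ | ∃ n : ℕ, c = n ∧ pdLE R n M}

section BalancedTensor

variable (R : Type u) [Ring R] (S : Type v) [Ring S]
variable (M : Type w) [AddCommGroup M] [Module Rᵐᵒᵖ M] [Module S M] [SMulCommClass Rᵐᵒᵖ S M]
variable (N : Type x) [AddCommGroup N] [Module R N]

/-- The subgroup of `M ⊗_ℤ N` generated by the balancing relations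
`(m·r) ⊗ n - m ⊗ (r·n)`.  It is recorded as an `S`-submodule for a left `S`-action on `M`
commuting with the right `R`-action; the generating set is stable under this `S`-action,
so this is the same subgroup as the `ℤ`-span of the relations. -/
def btRel : Submodule S (TensorProduct ℤ M N) :=
  Submodule.span S
    {t | ∃ (m : M) (r : R) (n : N),
      t = (MulOpposite.op r • m) ⊗ₜ[ℤ] n - m ⊗ₜ[ℤ] (r • n)}

/-- The balanced tensor product `M ⊗_R N` of a right `R`-module `M` and a left
`R`-module `N`, as a quotient of `M ⊗_ℤ N`.  It is a left `S`-module whenever `M`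
carries a left `S`-action commuting with the right `R`-action (take `S = ℤ` for the
plain tensor product of abelian groups). -/
abbrev BTensor := TensorProduct ℤ M N ⧸ btRel R S M N

end BalancedTensor

section Subalg

variable (k : Type u) [Field k] (A : Type u) [Ring A] [Algebra k A] (B : Subalgebra k A)

/-- The right action of the subalgebra `B` on `A` by right multiplication,
written as a left action of the opposite ring `Bᵐᵒᵖ`. -/
noncomputable instance moduleOpp : Module (↥B)ᵐᵒᵖ A :=
  Module.compHom A (RingHom.op B.val.toRingHom)

lemma moduleOpp_smul_def (b : ↥B) (a : A) : (MulOpposite.op b) • a = a * ↑b := rfl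

/-- Left multiplication by `A` commutes with the right `B`-action on `A`. -/
instance : SMulCommClass (↥B)ᵐᵒᵖ A A where
  smul_comm b' a x := by
    induction b' using MulOpposite.rec' with
    | _ b' =>
      show (a * x) * (b' : A) = a * (x * (b' : A))
      rw [mul_assoc]

end Subalg

/-! ### Functoriality and right exactness of the balanced tensor product -/

section TensorCalculus

variable (R : Type*) [Ring R] (S : Type*) [Ring S] (S' : Type*) [Ring S']
variable {X : Type*} [AddCommGroup X] [Module Rᵐᵒᵖ X] [Module S X]
variable {X' : Type*} [AddCommGroup X'] [Module Rᵐᵒᵖ X'] [Module S' X']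
variable {N : Type*} [AddCommGroup N] [Module R N]
variable {N' : Type*} [AddCommGroup N'] [Module R N']
variable {G : Type*} [AddCommGroup G]

/-- The pure tensor `x ⊗ n` in the balanced tensor product. -/
def bt (x : X) (n : N) : BTensor R S X N := (btRel R S X N).mkQ (x ⊗ₜ[ℤ] n)

lemma bt_add_left (x y : X) (n : N) : bt R S (x + y) n = bt R S x n + bt R S y n := by
  simp only [bt, TensorProduct.add_tmul, map_add]

lemma bt_add_right (x : X) (n n' : N) : bt R S x (n + n') = bt R S x n + bt R S x n' := by
  simp only [bt, TensorProduct.tmul_add, map_add]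

lemma bt_smul (s : S) (x : X) (n : N) : s • bt R S x n = bt R S (s • x) n := by
  simp only [bt, ← map_smul, TensorProduct.smul_tmul']

lemma bt_balanced (x : X) (r : R) (n : N) :
    bt R S (MulOpposite.op r • x) n = bt R S x (r • n) := by
  rw [bt, bt, ← sub_eq_zero, ← map_sub, Submodule.mkQ_apply, Submodule.Quotient.mk_eq_zero]
  exact Submodule.subset_span ⟨x, r, n, rfl⟩

lemma bt_zero_left (n : N) : bt R S (0 : X) n = 0 := by
  simp only [bt, TensorProduct.zero_tmul, map_zero]

lemma bt_zero_right (x : X) : bt R S x (0 : N) = 0 := by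
  simp only [bt, TensorProduct.tmul_zero, map_zero]

variable {R S} in
lemma bt_induction {p : BTensor R S X N → Prop} (t : BTensor R S X N) (h0 : p 0)
    (hb : ∀ x n, p (bt R S x n)) (ha : ∀ a b, p a → p b → p (a + b)) : p t := by
  obtain ⟨t, rfl⟩ := (btRel R S X N).mkQ_surjective t
  induction t with
  | zero => simpa using h0
  | tmul x n => exact hb x n
  | add a b iha ihb => rw [map_add]; exact ha _ _ iha ihb

variable [SMulCommClass Rᵐᵒᵖ S X]

variable {R} in
/-- The additive map out of the balanced tensor product defined by a balanced biadditive map. -/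
noncomputable def btLift (f : X →+ N →+ G)
    (hf : ∀ (x : X) (r : R) (n : N), f (MulOpposite.op r • x) n = f x (r • n)) :
    BTensor R S X N →+ G :=
  QuotientAddGroup.lift (btRel R S X N).toAddSubgroup
    (TensorProduct.liftAddHom f fun r m n ↦ by simp) <| by
    intro t ht
    -- The stronger assertion about all multiples `s • t` is stable under the `S`-action.
    have key : ∀ s : S, TensorProduct.liftAddHom f (fun r m n ↦ by simp) (s • t) = 0 := by
      change t ∈ btRel R S X N at ht
      unfold btRel at ht
      induction ht using Submodule.span_induction with
      | mem t h =>
        obtain ⟨x, r, n, rfl⟩ := h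
        intro s
        rw [smul_sub, TensorProduct.smul_tmul', TensorProduct.smul_tmul', map_sub,
          TensorProduct.liftAddHom_tmul, TensorProduct.liftAddHom_tmul, ← smul_comm, hf, sub_self]
      | zero => intro s; rw [smul_zero, map_zero]
      | add a b _ _ ha hb => intro s; rw [smul_add, map_add, ha, hb, add_zero]
      | smul c a _ ha => intro s; rw [← mul_smul]; exact ha _
    simpa using key 1

variable {R} in
@[simp] lemma btLift_bt (f : X →+ N →+ G)
    (hf : ∀ (x : X) (r : R) (n : N), f (MulOpposite.op r • x) n = f x (r • n)) (x : X) (n : N) :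
    btLift S f hf (bt R S x n) = f x n := rfl

variable {R} in
/-- The map `f ⊗ g` of balanced tensor products. The auxiliary rings `S` and `S'` acting on the
left need not be related, since the underlying group of `BTensor R S X N` does not depend on
`S`. -/
noncomputable def btMap (f : X →ₗ[Rᵐᵒᵖ] X') (g : N →ₗ[R] N') :
    BTensor R S X N →+ BTensor R S' X' N' :=
  btLift S (AddMonoidHom.mk' (fun x ↦ AddMonoidHom.mk' (fun n ↦ bt R S' (f x) (g n))
      fun a b ↦ by rw [map_add, bt_add_right])
    fun a b ↦ by ext n; simp [bt_add_left]) fun x r n ↦ by simp [bt_balanced]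

@[simp] lemma btMap_bt (f : X →ₗ[Rᵐᵒᵖ] X') (g : N →ₗ[R] N') (x : X) (n : N) :
    btMap S S' f g (bt R S x n) = bt R S' (f x) (g n) := rfl

lemma btMap_surjective (f : X →ₗ[Rᵐᵒᵖ] X') (g : N →ₗ[R] N') (hf : Function.Surjective f)
    (hg : Function.Surjective g) : Function.Surjective (btMap S S' f g) := by
  intro t
  induction t using bt_induction with
  | h0 => exact ⟨0, map_zero _⟩
  | hb x n =>
    obtain ⟨x, rfl⟩ := hf x
    obtain ⟨n, rfl⟩ := hg n
    exact ⟨bt R S x n, rfl⟩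
  | ha a b iha ihb =>
    obtain ⟨a, rfl⟩ := iha
    obtain ⟨b, rfl⟩ := ihb
    exact ⟨a + b, map_add _ _ _⟩

lemma btMap_id (t : BTensor R S X N) : btMap S S LinearMap.id LinearMap.id t = t := by
  induction t using bt_induction with
  | h0 => simp
  | hb x n => rfl
  | ha a b iha ihb => rw [map_add, iha, ihb]

lemma btMap_zero_left (g : N →ₗ[R] N') (t : BTensor R S X N) :
    btMap S S' (0 : X →ₗ[Rᵐᵒᵖ] X') g t = 0 := by
  induction t using bt_induction with
  | h0 => simp
  | hb x n => exact bt_zero_left R S' (g n)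
  | ha a b iha ihb => rw [map_add, iha, ihb, add_zero]

lemma btMap_zero_right (f : X →ₗ[Rᵐᵒᵖ] X') (t : BTensor R S X N) :
    btMap S S' f (0 : N →ₗ[R] N') t = 0 := by
  induction t using bt_induction with
  | h0 => simp
  | hb x n => exact bt_zero_right R S' (f x)
  | ha a b iha ihb => rw [map_add, iha, ihb, add_zero]

lemma btMap_smul {X' : Type*} [AddCommGroup X'] [Module Rᵐᵒᵖ X'] [Module S X']
    (f : X →ₗ[Rᵐᵒᵖ] X') (hf : ∀ (s : S) (x : X), f (s • x) = s • f x) (g : N →ₗ[R] N') (s : S)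
    (t : BTensor R S X N) : btMap S S f g (s • t) = s • btMap S S f g t := by
  induction t using bt_induction with
  | h0 => simp
  | hb x n => rw [bt_smul, btMap_bt, btMap_bt, hf, bt_smul]
  | ha a b iha ihb => rw [smul_add, map_add, iha, ihb, map_add, smul_add]

variable [SMulCommClass Rᵐᵒᵖ S' X']

lemma btMap_btMap (S'' : Type*) [Ring S''] {X'' : Type*} [AddCommGroup X''] [Module Rᵐᵒᵖ X'']
    [Module S'' X''] {N'' : Type*} [AddCommGroup N''] [Module R N'']
    (f : X →ₗ[Rᵐᵒᵖ] X') (g : N →ₗ[R] N') (f' : X' →ₗ[Rᵐᵒᵖ] X'') (g' : N' →ₗ[R] N'')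
    (t : BTensor R S X N) :
    btMap S' S'' f' g' (btMap S S' f g t) = btMap S S'' (f' ∘ₗ f) (g' ∘ₗ g) t := by
  induction t using bt_induction with
  | h0 => simp
  | hb x n => rfl
  | ha a b iha ihb => simp only [map_add, iha, ihb]

/-- Right exactness in both variables at once: the kernel of `f ⊗ g`, for `f` and `g` surjective,
is contained in any subgroup containing `x ⊗ n` whenever `f x = 0` or `g n = 0`. The inverse
of `(X ⊗ N) / H → X' ⊗ N'` is defined on pure tensors by choosing preimages. -/
lemma mem_of_btMap_eq_zero (f : X →ₗ[Rᵐᵒᵖ] X') (g : N →ₗ[R] N') (hf : Function.Surjective f)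
    (hg : Function.Surjective g) (H : AddSubgroup (BTensor R S X N))
    (hl : ∀ x n, f x = 0 → bt R S x n ∈ H) (hr : ∀ x n, g n = 0 → bt R S x n ∈ H)
    (t : BTensor R S X N) (ht : btMap S S' f g t = 0) : t ∈ H := by
  let q : BTensor R S X N →+ BTensor R S X N ⧸ H := QuotientAddGroup.mk' H
  have q0 : ∀ {t}, t ∈ H → q t = 0 := fun h ↦ (QuotientAddGroup.eq_zero_iff _).2 h
  have key : ∀ x y n n', f x = f y → g n = g n' → q (bt R S x n) = q (bt R S y n') := by
    intro x y n n' hx hn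
    have h1 : x = (x - y) + y := by abel
    have h2 : n = (n - n') + n' := by abel
    rw [h1, bt_add_left, map_add, q0 (hl _ _ (by rw [map_sub, hx, sub_self])), zero_add, h2,
      bt_add_right, map_add, q0 (hr _ _ (by rw [map_sub, hn, sub_self])), zero_add]
  let σ := Function.surjInv hf
  let τ := Function.surjInv hg
  have hσ : ∀ x, f (σ x) = x := Function.surjInv_eq hf
  have hτ : ∀ x, g (τ x) = x := Function.surjInv_eq hg
  let inv : BTensor R S' X' N' →+ BTensor R S X N ⧸ H :=
    btLift S' (AddMonoidHom.mk' (fun x ↦ AddMonoidHom.mk' (fun n ↦ q (bt R S (σ x) (τ n)))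
      fun a b ↦ by
        rw [← map_add, ← bt_add_right]
        exact key _ _ _ _ rfl (by simp [hτ]))
    fun a b ↦ by
      ext n
      change q _ = q _ + q _
      rw [← map_add, ← bt_add_left]
      exact key _ _ _ _ (by simp [hσ]) rfl) fun x r n ↦ by
        change q _ = q _
        rw [key _ (MulOpposite.op r • σ x) _ (τ n) (by simp [hσ]) rfl, bt_balanced]
        exact key _ _ _ _ rfl (by simp [hτ])
  have hinv : ∀ t, inv (btMap S S' f g t) = q t := by
    intro t
    induction t using bt_induction with
    | h0 => simp
    | hb x n => exact key _ _ _ _ (by simp [hσ]) (by simp [hτ])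
    | ha a b iha ihb => rw [map_add, map_add, iha, ihb, map_add]
  have := hinv t
  rw [ht, map_zero] at this
  exact (QuotientAddGroup.eq_zero_iff _).1 this.symm

end TensorCalculus

/-! ### Tensor products with projective modules -/

section Projective

variable (R : Type*) [Ring R] (S : Type*) [Ring S]
variable {X : Type*} [AddCommGroup X] [Module Rᵐᵒᵖ X] [Module S X] [SMulCommClass Rᵐᵒᵖ S X]
variable {N : Type*} [AddCommGroup N] [Module R N]

/-- A section `s` of `⨁_X R → X`, for a right module `X`, embeds `X ⊗ N` into `⨁_X N`; the
formula for the embedding shows that it is natural in `N`. -/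
lemma exists_embedding_right (s : X →ₗ[Rᵐᵒᵖ] X →₀ Rᵐᵒᵖ)
    (hs : Function.LeftInverse (Finsupp.linearCombination Rᵐᵒᵖ id) s) :
    ∃ Φ : BTensor R S X N →+ (X →₀ N), Function.Injective Φ ∧
      ∀ x n i, Φ (bt R S x n) i = (s x i).unop • n := by
  let Φ : BTensor R S X N →+ (X →₀ N) :=
    btLift S (AddMonoidHom.mk' (fun x ↦ AddMonoidHom.mk'
        (fun n ↦ (s x).mapRange (fun r ↦ r.unop • n) (by simp))
        fun a b ↦ by ext; simp)
      fun a b ↦ by ext; simp [add_smul]) fun x r n ↦ by ext; simp [mul_smul]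
  let Ψ : (X →₀ N) →+ BTensor R S X N := Finsupp.liftAddHom fun i ↦
    AddMonoidHom.mk' (fun n ↦ bt R S i n) fun a b ↦ bt_add_right R S i a b
  refine ⟨Φ, Function.LeftInverse.injective (g := Ψ) fun t ↦ ?_, fun x n i ↦ rfl⟩
  induction t using bt_induction with
  | h0 => simp
  | ha a b iha ihb => simp only [map_add, iha, ihb]
  | hb x n =>
    let β : X →+ BTensor R S X N :=
      AddMonoidHom.mk' (fun x ↦ bt R S x n) fun a b ↦ bt_add_left R S a b n
    have h : β (Finsupp.linearCombination Rᵐᵒᵖ id (s x)) = β x := by rw [hs x]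
    rw [Finsupp.linearCombination_apply, map_finsuppSum] at h
    change Finsupp.sum (Finsupp.mapRange (fun r ↦ r.unop • n) (by simp) (s x)) _ = β x
    rw [← h, Finsupp.sum_mapRange_index (by simp [bt_zero_right])]
    exact Finsupp.sum_congr fun i _ ↦ (bt_balanced R S i _ n).symm

/-- Projective right modules are flat. -/
lemma btMap_injective_of_projective_right (hX : Module.Projective Rᵐᵒᵖ X)
    {N' : Type*} [AddCommGroup N'] [Module R N'] (g : N →ₗ[R] N') (hg : Function.Injective g) :
    Function.Injective (btMap S S (LinearMap.id : X →ₗ[Rᵐᵒᵖ] X) g) := by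
  obtain ⟨s, hs⟩ := hX.out
  obtain ⟨Φ, hΦ, hΦs⟩ := exists_embedding_right R S (N := N) s hs
  obtain ⟨Φ', -, hΦs'⟩ := exists_embedding_right R S (N := N') s hs
  have hnat : ∀ t i, Φ' (btMap S S LinearMap.id g t) i = g (Φ t i) := by
    intro t i
    induction t using bt_induction with
    | h0 => simp
    | ha a b iha ihb => simp only [map_add, Finsupp.add_apply, iha, ihb]
    | hb x n => rw [btMap_bt, hΦs', hΦs, map_smul, LinearMap.id_apply]
  intro t t' h
  refine hΦ (Finsupp.ext fun i ↦ hg ?_)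
  rw [← hnat, h, hnat]

/-- A section `s` of `⨁_N R → N`, for a left module `N`, exhibits `X ⊗ N` as an `S`-linear retract
of `⨁_N X`; the formula for the embedding shows that it is natural in `X`. -/
lemma exists_retract_left (s : N →ₗ[R] N →₀ R)
    (hs : Function.LeftInverse (Finsupp.linearCombination R id) s) :
    ∃ (Φ : BTensor R S X N →ₗ[S] (N →₀ X)) (Ψ : (N →₀ X) →ₗ[S] BTensor R S X N),
      Ψ ∘ₗ Φ = LinearMap.id ∧ ∀ x n i, Φ (bt R S x n) i = MulOpposite.op (s n i) • x := by
  let φ : BTensor R S X N →+ (N →₀ X) :=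
    btLift S (AddMonoidHom.mk' (fun x ↦ AddMonoidHom.mk'
        (fun n ↦ (s n).mapRange (fun r ↦ MulOpposite.op r • x) (by simp))
        fun a b ↦ by ext; simp [add_smul])
      fun a b ↦ by ext; simp) fun x r n ↦ by ext; simp [mul_smul]
  let Φ : BTensor R S X N →ₗ[S] (N →₀ X) :=
    { φ with
      map_smul' := by
        intro c t
        change φ (c • t) = c • φ t
        induction t using bt_induction with
        | h0 => simp
        | ha a b iha ihb => simp only [smul_add, map_add, iha, ihb]
        | hb x n =>
          rw [bt_smul]
          ext i
          exact smul_comm (MulOpposite.op (s n i)) c x }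
  let Ψ : (N →₀ X) →ₗ[S] BTensor R S X N := Finsupp.lsum ℕ fun i ↦
    { toFun := fun x ↦ bt R S x i
      map_add' := fun a b ↦ bt_add_left R S a b i
      map_smul' := fun c x ↦ (bt_smul R S c x i).symm }
  refine ⟨Φ, Ψ, LinearMap.ext fun t ↦ ?_, fun x n i ↦ rfl⟩
  induction t using bt_induction with
  | h0 => simp
  | ha a b iha ihb => simp only [map_add, iha, ihb]
  | hb x n =>
    let β : N →+ BTensor R S X N :=
      AddMonoidHom.mk' (fun n ↦ bt R S x n) fun a b ↦ bt_add_right R S x a b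
    have h : β (Finsupp.linearCombination R id (s n)) = β n := by rw [hs n]
    rw [Finsupp.linearCombination_apply, map_finsuppSum] at h
    change Finsupp.sum (Finsupp.mapRange (fun r ↦ MulOpposite.op r • x) (by simp) (s n)) _ = β n
    rw [← h, Finsupp.sum_mapRange_index (by simp [bt_zero_left])]
    exact Finsupp.sum_congr fun i _ ↦ bt_balanced R S x _ i

/-- Projective left modules are flat. -/
lemma btMap_injective_of_projective_left (hN : Module.Projective R N)
    {X' : Type*} [AddCommGroup X'] [Module Rᵐᵒᵖ X'] [Module S X'] [SMulCommClass Rᵐᵒᵖ S X']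
    (f : X →ₗ[Rᵐᵒᵖ] X') (hf : Function.Injective f) :
    Function.Injective (btMap S S f (LinearMap.id : N →ₗ[R] N)) := by
  obtain ⟨s, hs⟩ := hN.out
  obtain ⟨Φ, Ψ, hΦ, hΦs⟩ := exists_retract_left R S (X := X) s hs
  obtain ⟨Φ', -, -, hΦs'⟩ := exists_retract_left R S (X := X') s hs
  have hnat : ∀ t i, Φ' (btMap S S f LinearMap.id t) i = f (Φ t i) := by
    intro t i
    induction t using bt_induction with
    | h0 => simp
    | ha a b iha ihb => simp only [map_add, Finsupp.add_apply, iha, ihb]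
    | hb x n => rw [btMap_bt, hΦs', hΦs, map_smul, LinearMap.id_apply]
  intro t t' h
  refine Function.LeftInverse.injective (g := Ψ) (LinearMap.congr_fun hΦ)
    (Finsupp.ext fun i ↦ hf ?_)
  rw [← hnat, h, hnat]

/-- If `X` is free over `S` and `N` is projective over `R`, then `X ⊗_R N` is projective
over `S`. -/
lemma projective_btensor [Module.Free S X] (hN : Module.Projective R N) :
    Module.Projective S (BTensor R S X N) := by
  obtain ⟨s, hs⟩ := hN.out
  obtain ⟨Φ, Ψ, hΦ, -⟩ := exists_retract_left R S (X := X) s hs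
  exact Module.Projective.of_split Φ Ψ hΦ

end Projective

/-! ### Projective dimension and syzygies -/

section ProjectiveDimension

open CategoryTheory

variable (R : Type u) [Ring R]

/-- The recursive notion `pdLE` agrees with the one defined by vanishing of `Ext`. -/
lemma pdLE_iff_hasProjectiveDimensionLE (n : ℕ) (M : Type u) [AddCommGroup M] [Module R M] :
    pdLE R n M ↔ HasProjectiveDimensionLE (ModuleCat.of R M) n := by
  induction n generalizing M with
  | zero =>
    rw [← projective_iff_hasProjectiveDimensionLE_zero, ← IsProjective.iff_projective]
    rfl
  | succ n ih =>
    constructor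
    · rintro ⟨P, _, _, f, hP, hf, hK⟩
      exact ((f.shortExact_shortComplexKer hf).hasProjectiveDimensionLT_X₃_iff n
        ((IsProjective.iff_projective P).1 hP)).2 ((ih _).1 hK)
    · intro h
      refine ⟨M →₀ R, inferInstance, inferInstance, Finsupp.linearCombination R id, inferInstance,
        Finsupp.linearCombination_id_surjective R M, ?_⟩
      have hf := Finsupp.linearCombination_id_surjective R M
      exact (ih _).2 (((LinearMap.shortExact_shortComplexKer hf).hasProjectiveDimensionLT_X₃_iff n
        ((IsProjective.iff_projective (M →₀ R)).1 inferInstance)).1 h)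

lemma pdLE_of_linearEquiv (n : ℕ) {M N : Type u} [AddCommGroup M] [Module R M] [AddCommGroup N]
    [Module R N] (e : M ≃ₗ[R] N) (h : pdLE R n M) : pdLE R n N := by
  rw [pdLE_iff_hasProjectiveDimensionLE] at h ⊢
  exact hasProjectiveDimensionLT_of_iso e.toModuleIso _

/-- Passing to a first syzygy does not increase the projective dimension. -/
lemma pdLE_ker (n : ℕ) {P M : Type u} [AddCommGroup P] [Module R P] [AddCommGroup M]
    [Module R M] (hP : Module.Projective R P) (f : P →ₗ[R] M) (hf : Function.Surjective f)
    (h : pdLE R n M) : pdLE R n (LinearMap.ker f) := by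
  rw [pdLE_iff_hasProjectiveDimensionLE] at h ⊢
  have : Projective (ModuleCat.of R P) := (IsProjective.iff_projective P).1 hP
  exact (f.shortExact_shortComplexKer hf).hasProjectiveDimensionLT_X₁ (n + 1)
    (hasProjectiveDimensionLT_of_ge (ModuleCat.of R P) 1 (n + 1) (by lia))
    (hasProjectiveDimensionLT_of_ge (ModuleCat.of R M) (n + 1) (n + 1 + 1) (by lia))

/-- `IsSyz R m N`: the module `N` is an `m`-th syzygy of some `R`-module. -/
def IsSyz : ℕ → ∀ (N : Type u) [AddCommGroup N] [Module R N], Prop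
  | 0, _, _, _ => True
  | m + 1, N, _, _ => ∃ (Q N' : Type u) (_ : AddCommGroup Q) (_ : Module R Q)
      (_ : AddCommGroup N') (_ : Module R N') (i : N →ₗ[R] Q) (p : Q →ₗ[R] N'),
      Module.Projective R Q ∧ Function.Injective i ∧ Function.Exact i p ∧
        Function.Surjective p ∧ IsSyz m N'

lemma IsSyz.ker {m : ℕ} {P N : Type u} [AddCommGroup P] [Module R P] [AddCommGroup N]
    [Module R N] (hP : Module.Projective R P) (f : P →ₗ[R] N) (hf : Function.Surjective f)
    (h : IsSyz R m N) : IsSyz R (m + 1) (LinearMap.ker f) :=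
  ⟨P, N, inferInstance, inferInstance, inferInstance, inferInstance, (LinearMap.ker f).subtype, f,
    hP, Subtype.val_injective, f.exact_subtype_ker_map, hf, h⟩

lemma IsSyz.of_linearEquiv {m : ℕ} {M N : Type u} [AddCommGroup M] [Module R M] [AddCommGroup N]
    [Module R N] (e : M ≃ₗ[R] N) (h : IsSyz R m M) : IsSyz R m N := by
  cases m with
  | zero => trivial
  | succ m =>
    obtain ⟨Q, N', _, _, _, _, i, p, hQ, hi, hip, hp, h⟩ := h
    refine ⟨Q, N', inferInstance, inferInstance, inferInstance, inferInstance, i ∘ₗ e.symm, p, hQ,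
      hi.comp e.symm.injective, fun y ↦ (hip y).trans ?_, hp, h⟩
    simp [e.symm.surjective.range_comp]

/-- An `m`-th syzygy of a `t`-th syzygy of projective dimension at most `s` is a `(t + m)`-th
syzygy of projective dimension at most `s`. The induction on `m` replaces `M` by `ker ε` and
shifts the sequence by one. -/
lemma syzygy_properties (s m t : ℕ) (M : Type u) [AddCommGroup M] [Module R M]
    (Q : ℕ → Type u) [∀ i, AddCommGroup (Q i)] [∀ i, Module R (Q i)]
    (d : ∀ i, Q (i + 1) →ₗ[R] Q i) (ε : Q 0 →ₗ[R] M)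
    (hproj : ∀ i, i < m → Module.Projective R (Q i))
    (hzero : ∀ i, m < i → Subsingleton (Q i))
    (hsurj : Function.Surjective ε)
    (hex0 : LinearMap.range (d 0) = LinearMap.ker ε)
    (hex : ∀ i, LinearMap.range (d (i + 1)) = LinearMap.ker (d i))
    (hM : pdLE R s M) (ht : IsSyz R t M) : pdLE R s (Q m) ∧ IsSyz R (t + m) (Q m) := by
  induction m generalizing t M Q with
  | zero =>
    have hinj : Function.Injective ε := by
      have := hzero 1 one_pos
      rw [← LinearMap.ker_eq_bot, ← hex0, LinearMap.range_eq_bot]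
      ext x
      rw [Subsingleton.elim x 0, map_zero, map_zero]
    let e := (LinearEquiv.ofBijective ε ⟨hinj, hsurj⟩).symm
    exact ⟨pdLE_of_linearEquiv R s e hM, ht.of_linearEquiv R e⟩
  | succ m ih =>
    have h0 := hproj 0 (Nat.succ_pos m)
    have := ih (t + 1) (LinearMap.ker ε) (fun i ↦ Q (i + 1)) (fun i ↦ d (i + 1))
      ((d 0).codRestrict (LinearMap.ker ε) fun x ↦ hex0 ▸ LinearMap.mem_range_self (d 0) x)
      (fun i hi ↦ hproj _ (by lia)) (fun i hi ↦ hzero _ (by lia))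
      (by
        rintro ⟨x, hx⟩
        obtain ⟨y, hy⟩ : x ∈ LinearMap.range (d 0) := hex0 ▸ hx
        exact ⟨y, Subtype.ext hy⟩)
      (by rw [LinearMap.ker_codRestrict]; exact hex 0) (fun i ↦ hex (i + 1))
      (pdLE_ker R s h0 ε hsurj hM) (ht.ker R h0 ε hsurj)
    rwa [add_right_comm t 1 m] at this

end ProjectiveDimension

/-! ### Vanishing of `Tor₁` on high syzygies -/

section Tor

variable (R : Type u) [Ring R]

/-- If the right module `X` has projective dimension at most `n` and the left module `N` is an
`m`-th syzygy with `m ≥ n`, then `X ⊗ -` preserves injectivity of `K → P` whenever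
`P / K ≅ N`. In other words, `Tor₁(X, N) = 0`. -/
lemma btMap_injective_of_isSyz (n : ℕ) (X : Type u) [AddCommGroup X] [Module Rᵐᵒᵖ X]
    (hX : pdLE Rᵐᵒᵖ n X) (m : ℕ) (hnm : n ≤ m) (N : Type u) [AddCommGroup N] [Module R N]
    (hN : IsSyz R m N) (K P : Type u) [AddCommGroup K] [Module R K] [AddCommGroup P] [Module R P]
    (g : K →ₗ[R] P) (p : P →ₗ[R] N) (hg : Function.Injective g) (hgp : Function.Exact g p)
    (hp : Function.Surjective p) :
    Function.Injective (btMap ℤ ℤ (LinearMap.id : X →ₗ[Rᵐᵒᵖ] X) g) := by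
  induction n generalizing X m N K P with
  | zero => exact btMap_injective_of_projective_right R ℤ hX g hg
  | succ n ih =>
    obtain ⟨F, _, _, f, hF, hf, hY⟩ := hX
    obtain ⟨m, rfl⟩ : ∃ m', m = m' + 1 := ⟨m - 1, by lia⟩
    obtain ⟨Q, N', _, _, _, _, i, q, hQ, hi, hiq, hq, hN'⟩ := hN
    set Y := LinearMap.ker f
    let j : Y →ₗ[Rᵐᵒᵖ] F := Y.subtype
    -- `Y ⊗ N → F ⊗ N` is injective, since its composite with `F ⊗ N → F ⊗ Q` is the
    -- composite of the injections `Y ⊗ N → Y ⊗ Q → F ⊗ Q`.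
    have hYN : Function.Injective (btMap ℤ ℤ j (LinearMap.id : N →ₗ[R] N)) := by
      have h1 := ih Y hY m (by lia) N' hN' N Q i q hi hiq hq
      have h2 := btMap_injective_of_projective_left R ℤ hQ j Subtype.val_injective
      intro a b hab
      apply h1
      apply h2
      have := congrArg (btMap ℤ ℤ (LinearMap.id : F →ₗ[Rᵐᵒᵖ] F) i) hab
      simpa only [btMap_btMap, LinearMap.id_comp, LinearMap.comp_id] using this
    have hFK := btMap_injective_of_projective_right R ℤ hF g hg
    rw [injective_iff_map_eq_zero]
    intro x hx
    -- Lift `x` to `z ∈ F ⊗ K`.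
    obtain ⟨z, rfl⟩ := btMap_surjective R ℤ ℤ f (LinearMap.id : K →ₗ[R] K) hf
      Function.surjective_id x
    -- The image of `z` in `F ⊗ P` comes from some `y ∈ Y ⊗ P`.
    obtain ⟨y, hy⟩ : btMap ℤ ℤ (LinearMap.id : F →ₗ[Rᵐᵒᵖ] F) g z ∈
        (btMap ℤ ℤ j (LinearMap.id : P →ₗ[R] P)).range := by
      refine mem_of_btMap_eq_zero R ℤ ℤ f (LinearMap.id : P →ₗ[R] P) hf Function.surjective_id
        (btMap ℤ ℤ j (LinearMap.id : P →ₗ[R] P)).range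
        (fun x n hx ↦ ⟨bt R ℤ ⟨x, hx⟩ n, rfl⟩)
        (fun x n hn ↦ ⟨0, by rw [map_zero, show n = 0 from hn, bt_zero_right]⟩) _ ?_
      simpa only [btMap_btMap, LinearMap.id_comp, LinearMap.comp_id] using hx
    -- Its image in `Y ⊗ N` vanishes in `F ⊗ N`, hence vanishes, so `y` comes from `Y ⊗ K`.
    have hpg : p ∘ₗ g = 0 := hgp.linearMap_comp_eq_zero
    obtain ⟨y', rfl⟩ : y ∈ (btMap ℤ ℤ (LinearMap.id : Y →ₗ[Rᵐᵒᵖ] Y) g).range := by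
      refine mem_of_btMap_eq_zero R ℤ ℤ (LinearMap.id : Y →ₗ[Rᵐᵒᵖ] Y) p Function.surjective_id hp
        (btMap ℤ ℤ (LinearMap.id : Y →ₗ[Rᵐᵒᵖ] Y) g).range
        (fun x n hx ↦ ⟨0, by rw [map_zero, show x = 0 from hx, bt_zero_left]⟩)
        (fun x n hn ↦ ?_) _ ?_
      · obtain ⟨k, rfl⟩ := (hgp n).1 hn
        exact ⟨bt R ℤ x k, rfl⟩
      · apply hYN
        have := congrArg (btMap ℤ ℤ (LinearMap.id : F →ₗ[Rᵐᵒᵖ] F) p) hy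
        simpa only [btMap_btMap, LinearMap.id_comp, LinearMap.comp_id, hpg, btMap_zero_right,
          map_zero] using this
    -- By flatness of `F`, `z` is the image of `y'`, so it dies in `X ⊗ K`.
    have hz : btMap ℤ ℤ j (LinearMap.id : K →ₗ[R] K) y' = z := by
      apply hFK
      rw [← hy]
      simp only [btMap_btMap, LinearMap.id_comp, LinearMap.comp_id]
    have hfj : f ∘ₗ j = 0 := LinearMap.ext fun y ↦ y.2
    rw [← hz, btMap_btMap, hfj, btMap_zero_left]

end Tor

/-! ### Projective dimension of tensor products -/

section Induction

variable (R : Type u) [Ring R] (S : Type u) [Ring S]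
variable (X : Type u) [AddCommGroup X] [Module Rᵐᵒᵖ X] [Module S X] [SMulCommClass Rᵐᵒᵖ S X]

/-- The vanishing of `Tor₁` for the group `BTensor R S X -`, for an arbitrary ring `S` acting
on `X`. -/
lemma btMap_injective_of_isSyz' (n : ℕ) (hX : pdLE Rᵐᵒᵖ n X) (m : ℕ) (hnm : n ≤ m)
    (N : Type u) [AddCommGroup N] [Module R N] (hN : IsSyz R m N) (K P : Type u)
    [AddCommGroup K] [Module R K] [AddCommGroup P] [Module R P] (g : K →ₗ[R] P) (p : P →ₗ[R] N)
    (hg : Function.Injective g) (hgp : Function.Exact g p) (hp : Function.Surjective p) :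
    Function.Injective (btMap S S (LinearMap.id : X →ₗ[Rᵐᵒᵖ] X) g) := by
  have hZ := btMap_injective_of_isSyz R n X hX m hnm N hN K P g p hg hgp hp
  -- The identity of `X ⊗ K`, as a map between its incarnations for `S` and for `ℤ`.
  have hS : Function.Injective
      (btMap S ℤ (LinearMap.id : X →ₗ[Rᵐᵒᵖ] X) (LinearMap.id : K →ₗ[R] K)) :=
    Function.LeftInverse.injective
      (g := btMap ℤ S (LinearMap.id : X →ₗ[Rᵐᵒᵖ] X) (LinearMap.id : K →ₗ[R] K)) fun t ↦ by
        rw [btMap_btMap]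
        exact btMap_id R S t
  intro a b hab
  apply hS
  apply hZ
  have := congrArg (btMap S ℤ (LinearMap.id : X →ₗ[Rᵐᵒᵖ] X) (LinearMap.id : P →ₗ[R] P)) hab
  simpa only [btMap_btMap, LinearMap.id_comp, LinearMap.comp_id] using this

/-- On `m`-th syzygies with `m ≥ pd X`, the functor `X ⊗_R -` does not increase the projective
dimension: it preserves projectives, and it preserves the exactness of
`0 → ker f → P → N → 0`, where `ker f` is an `(m + 1)`-th syzygy. -/
lemma pdLE_btensor [Module.Free S X] (n : ℕ) (hX : pdLE Rᵐᵒᵖ n X) (s m : ℕ) (hnm : n ≤ m)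
    (N : Type u) [AddCommGroup N] [Module R N] (hN : IsSyz R m N) (hs : pdLE R s N) :
    pdLE S s (BTensor R S X N) := by
  induction s generalizing m N with
  | zero => exact projective_btensor R S hs
  | succ s ih =>
    obtain ⟨P, _, _, f, hP, hf, hK⟩ := hs
    let K := LinearMap.ker f
    let L {N N' : Type u} [AddCommGroup N] [Module R N] [AddCommGroup N'] [Module R N']
        (g : N →ₗ[R] N') : BTensor R S X N →ₗ[S] BTensor R S X N' :=
      { btMap S S (LinearMap.id : X →ₗ[Rᵐᵒᵖ] X) g with
        map_smul' := btMap_smul R S LinearMap.id (fun _ _ ↦ rfl) g }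
    have hinj : Function.Injective (L K.subtype) :=
      btMap_injective_of_isSyz' R S X n hX m hnm N hN K P K.subtype f Subtype.val_injective
        f.exact_subtype_ker_map hf
    have hfK : f ∘ₗ K.subtype = 0 := LinearMap.ext fun y ↦ y.2
    have hrange : LinearMap.range (L K.subtype) = LinearMap.ker (L f) := by
      apply le_antisymm
      · rintro _ ⟨t, rfl⟩
        change btMap S S _ f (btMap S S _ K.subtype t) = 0
        rw [btMap_btMap, hfK, btMap_zero_right]
      · intro t ht
        exact mem_of_btMap_eq_zero R S S (LinearMap.id : X →ₗ[Rᵐᵒᵖ] X) f Function.surjective_id hf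
          (LinearMap.range (L K.subtype)).toAddSubgroup
          (fun x n hx ↦ ⟨0, by rw [map_zero, show x = 0 from hx, bt_zero_left]⟩)
          (fun x n hn ↦ ⟨bt R S x ⟨n, hn⟩, rfl⟩) t ht
    refine ⟨BTensor R S X P, inferInstance, inferInstance, L f, projective_btensor R S hP,
      btMap_surjective R S S _ f Function.surjective_id hf, ?_⟩
    exact pdLE_of_linearEquiv S s
      ((LinearEquiv.ofInjective _ hinj).trans (LinearEquiv.ofEq _ _ hrange))
      (ih (m + 1) (by lia) K (hN.ker R hP f hf) hK)

end Induction

lemma pdLE_of_projDim_eq (R : Type u) [Ring R] (M : Type v) [AddCommGroup M] [Module R M] (n : ℕ)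
    (h : projDim R M = n) : pdLE R n M := by
  unfold projDim at h
  have hne : {c : ℕ∞ | ∃ n : ℕ, c = n ∧ pdLE R n M}.Nonempty := by
    by_contra hne
    rw [Set.not_nonempty_iff_eq_empty] at hne
    rw [hne, sInf_empty] at h
    exact ENat.top_ne_natCast n h
  obtain ⟨k, hk, hM⟩ := csInf_mem hne
  rw [h, Nat.cast_inj] at hk
  rwa [hk]

/-- **Lemma 2.3.** Let `B ⊆ A` be an extension of finite dimensional algebras with
`pd(A_B) = n < ∞` (projective dimension of `A` as a right `B`-module).  Let `M` be a left
`B`-module, `m ≥ n`, and let `N = Q m` be an `m`-th syzygy of `M`, i.e. there is an exact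
sequence `0 → N → Q_{m-1} → ⋯ → Q₀ → M → 0` of left `B`-modules with each `Qᵢ` (`i < m`)
projective.  Then `pd(_A A ⊗_B N) ≤ pd(_B M)`, where `A ⊗_B N` is a left `A`-module via
left multiplication on the first factor. -/
theorem pd_tensor_syzygy_le
    (k : Type u) [Field k] (A : Type u) [Ring A] [Algebra k A] [FiniteDimensional k A]
    (B : Subalgebra k A) (n : ℕ)
    (hA : projDim (↥B)ᵐᵒᵖ A = (n : ℕ∞))
    (m : ℕ) (hmn : n ≤ m)
    (M : Type u) [AddCommGroup M] [Module ↥B M]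
    (Q : ℕ → Type u) [∀ i, AddCommGroup (Q i)] [∀ i, Module ↥B (Q i)]
    (d : ∀ i, Q (i + 1) →ₗ[↥B] Q i) (ε : Q 0 →ₗ[↥B] M)
    (hproj : ∀ i, i < m → Module.Projective ↥B (Q i))
    (hzero : ∀ i, m < i → Subsingleton (Q i))
    (hsurj : Function.Surjective ε)
    (hex0 : LinearMap.range (d 0) = LinearMap.ker ε)
    (hex : ∀ i, LinearMap.range (d (i + 1)) = LinearMap.ker (d i)) :
    projDim A (BTensor ↥B A A (Q m)) ≤ projDim ↥B M := by
  refine le_sInf ?_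
  rintro _ ⟨s, rfl, hM⟩
  obtain ⟨hs, hsyz⟩ :=
    syzygy_properties ↥B s m 0 M Q d ε hproj hzero hsurj hex0 hex hM trivial
  rw [Nat.zero_add] at hsyz
  exact sInf_le ⟨s, rfl, pdLE_btensor ↥B A A n (pdLE_of_projDim_eq _ _ n hA) s m hmn (Q m) hsyz hs⟩
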